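/- arXiv:2006.05188 — 2 statements merged into one kernel-verified Lean document; each statement's English description precedes it below -/
import Mathlib

section
/- Suppose F ⊆ Θ intersects every equivalence set, i.e. F ∩ E(θ) ≠ ∅ for all θ ∈ Θ. Then for every B that is a finite intersection from S and every A ∈ S, one has (F ∩ B) ∩ A = ∅ if and only if B ∩ A = ∅; that is, F ∩ B is a Decision Problem Oracle set for B. (Sufficiency half of the proof of Theorem 2 / Proposition 15 of the paper.) -/
/-- The collection `S(θ)` of sets in `S` containing `θ`. -/
def satOf {Θ : Type*} (S : Set (Set Θ)) (θ : Θ) : Set (Set Θ) := {A ∈ S | θ ∈ A}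

/-- The equivalence set `E(θ)`: the intersection of all sets in `S` containing `θ`
(equals all of `Θ` when no such set exists). -/
def eqSet {Θ : Type*} (S : Set (Set Θ)) (θ : Θ) : Set Θ := ⋂ A ∈ satOf S θ, A

/-- `B` is a finite intersection of members of `S` (the collection `Sat_∩`). -/
def IsFiniteInter {Θ : Type*} (S : Set (Set Θ)) (B : Set Θ) : Prop :=
  ∃ (t : ℕ) (A : Fin t → Set Θ), 1 ≤ t ∧ (∀ i, A i ∈ S) ∧ B = ⋂ i, A i

theorem inter_minimalRep_oracle {Θ : Type*} (S : Set (Set Θ)) (F : Set Θ)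
    (hF : ∀ θ : Θ, (F ∩ eqSet S θ).Nonempty) :
    ∀ B : Set Θ, IsFiniteInter S B → ∀ A ∈ S, ((F ∩ B) ∩ A = ∅ ↔ B ∩ A = ∅) := by
  rintro B ⟨t, C, -, hC, rfl⟩ A hA
  constructor
  · intro h
    by_contra hne
    obtain ⟨θ, hθB, hθA⟩ := Set.nonempty_iff_ne_empty.mpr hne
    -- A point of `F` in `eqSet S θ` lies in every member of `S` containing `θ`,
    -- hence in `A` and in each `C i`.
    obtain ⟨f, hfF, hfE⟩ := hF θ
    have key : ∀ D ∈ S, θ ∈ D → f ∈ D := fun D hD hθ => Set.mem_iInter₂.mp hfE D ⟨hD, hθ⟩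
    have hfB : f ∈ ⋂ i, C i :=
      Set.mem_iInter.mpr fun i => key (C i) (hC i) (Set.mem_iInter.mp hθB i)
    exact Set.eq_empty_iff_forall_notMem.mp h f ⟨⟨hfF, hfB⟩, key A hA hθA⟩
  · intro h
    exact Set.subset_eq_empty (Set.inter_subset_inter_left A Set.inter_subset_right) h
end

section
/- Assume finite identifiability: for every θ ∈ Θ there exist finitely many sets A_1, …, A_k ∈ S with ⋂_{i=1}^k A_i = E(θ). Let C assign to every nonempty finite sequence (A_1, …, A_t) of members of S a subset C(A_1,…,A_t) ⊆ ⋂_{i=1}^t A_i (storage efficiency), such that C(A_1,…,A_t,A_{t+1}) ⊆ C(A_1,…,A_t) for each extension of the sequence by a member of S (information efficiency), and such that each C(A_1,…,A_t) is a Decision Problem Oracle set for ⋂_{i=1}^t A_i. Then for every nonempty finite sequence (A_1,…,A_t) from S and every θ ∈ ⋂_{i=1}^t A_i, one has C(A_1,…,A_t) ∩ E(θ) ≠ ∅; i.e., the oracle sets retain at least one element of every equivalence set not yet ruled out (perfect memory). (Set-theoretic core of Theorem 2 / Proposition 15 of the paper.) -/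
/-- The intersection of the members of a finite sequence (list) of sets. -/
def listInter {Θ : Type*} (L : List (Set Θ)) : Set Θ := ⋂₀ {A | A ∈ L}

/-- Information efficiency, iterated over a finite list of extensions. -/
theorem oracle_append_subset {Θ : Type*} {S : Set (Set Θ)} {C : List (Set Θ) → Set Θ}
    (hinfo : ∀ (L : List (Set Θ)) (A : Set Θ), L ≠ [] → (∀ B ∈ L, B ∈ S) → A ∈ S →
      C (L ++ [A]) ⊆ C L)
    (M L : List (Set Θ)) (hL : L ≠ []) (hLS : ∀ B ∈ L, B ∈ S) (hMS : ∀ B ∈ M, B ∈ S) :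
    C (L ++ M) ⊆ C L := by
  induction M generalizing L with
  | nil => simp
  | cons A M ih =>
    have hA : A ∈ S := hMS A (by simp)
    have h := ih (L ++ [A]) (by simp)
      (by
        intro B hB
        rcases List.mem_append.1 hB with hB | hB
        · exact hLS B hB
        · rwa [List.mem_singleton.1 hB])
      (fun B hB => hMS B (List.mem_cons_of_mem _ hB))
    rw [List.append_assoc, List.singleton_append] at h
    exact h.trans (hinfo L A hL hLS hA)

theorem perfect_memory_of_oracle {Θ : Type*} (S : Set (Set Θ))
    -- finite identifiability
    (hid : ∀ θ : Θ, ∃ (k : ℕ) (A : Fin k → Set Θ),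
      1 ≤ k ∧ (∀ i, A i ∈ S) ∧ (⋂ i, A i) = eqSet S θ)
    -- the oracle-set assignment on nonempty finite sequences from `S`
    (C : List (Set Θ) → Set Θ)
    -- storage efficiency
    (hstore : ∀ L : List (Set Θ), L ≠ [] → (∀ A ∈ L, A ∈ S) → C L ⊆ listInter L)
    -- information efficiency
    (hinfo : ∀ (L : List (Set Θ)) (A : Set Θ), L ≠ [] → (∀ B ∈ L, B ∈ S) → A ∈ S →
      C (L ++ [A]) ⊆ C L)
    -- each `C L` is a Decision Problem Oracle set for the intersection of `L`
    (horacle : ∀ L : List (Set Θ), L ≠ [] → (∀ B ∈ L, B ∈ S) → ∀ A ∈ S,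
      (C L ∩ A = ∅ ↔ listInter L ∩ A = ∅)) :
    -- perfect memory
    ∀ L : List (Set Θ), L ≠ [] → (∀ B ∈ L, B ∈ S) →
      ∀ θ ∈ listInter L, (C L ∩ eqSet S θ).Nonempty := by
  intro L hL hLS θ hθ
  obtain ⟨k, A, hk, hAS, hA⟩ := hid θ
  have hθA : ∀ i, θ ∈ A i := by
    have hθE : θ ∈ eqSet S θ := Set.mem_iInter₂.2 fun _ hB => hB.2
    rw [← hA] at hθE
    exact Set.mem_iInter.1 hθE
  have hMS : ∀ B ∈ List.ofFn A, B ∈ S := by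
    intro B hB
    obtain ⟨i, rfl⟩ := (List.mem_ofFn' A B).1 hB
    exact hAS i
  have hne : L ++ List.ofFn A ≠ [] := by simp [hL]
  have hS : ∀ B ∈ L ++ List.ofFn A, B ∈ S := fun B hB =>
    (List.mem_append.1 hB).elim (hLS B) (hMS B)
  have hθLM : θ ∈ listInter (L ++ List.ofFn A) := by
    intro B hB
    rcases List.mem_append.1 hB with hB | hB
    · exact hθ B hB
    · obtain ⟨i, rfl⟩ := (List.mem_ofFn' A B).1 hB
      exact hθA i
  have hx : (C (L ++ List.ofFn A) ∩ A ⟨0, hk⟩).Nonempty := by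
    rw [Set.nonempty_iff_ne_empty, Ne, horacle _ hne hS _ (hAS _), ← Ne,
      ← Set.nonempty_iff_ne_empty]
    exact ⟨θ, hθLM, hθA _⟩
  obtain ⟨x, hxC, -⟩ := hx
  refine ⟨x, oracle_append_subset hinfo _ L hL hLS hMS hxC, ?_⟩
  rw [← hA]
  exact Set.mem_iInter.2 fun i => hstore _ hne hS hxC (A i)
    (List.mem_append_right _ ((List.mem_ofFn' A _).2 ⟨i, rfl⟩))
end
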